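/- Let F be a finite field of odd cardinality q and let ε ∈ F be a nonsquare. Let u₁ be the 2×2 matrix with rows (1, 1) and (0, 1), and let u_ε be the matrix with rows (1, ε) and (0, 1). Then every g ∈ SL(2,F) with g ≠ 1 and (g − 1)² = 0 is conjugate in SL(2,F) to exactly one of u₁ and u_ε; in particular u₁ and u_ε are not conjugate in SL(2,F). (This is the classification of the nontrivial unipotent conjugacy classes U₁ and U_ε of SL(2,F) used throughout the paper.) -/

import Mathlib

/-- The unipotent element `u₁ = !![1, 1; 0, 1]` of `SL(2,F)`. -/
def u1 (F : Type*) [Field F] : Matrix.SpecialLinearGroup (Fin 2) F :=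
  ⟨!![1, 1; 0, 1], by simp [Matrix.det_fin_two_of]⟩

/-- The unipotent element `u_ε = !![1, ε; 0, 1]` of `SL(2,F)`. -/
def ueps (F : Type*) [Field F] (ε : F) : Matrix.SpecialLinearGroup (Fin 2) F :=
  ⟨!![1, ε; 0, 1], by simp [Matrix.det_fin_two_of]⟩

/-!
Over any field, let `g ∈ SL(2,F)` satisfy `N ^ 2 = 0` and `N ≠ 0` for `N = g - 1`. Some vector `w`
has `d = det (N w, w) ≠ 0`, and in the basis `N w`, `d⁻¹ w`, which has determinant `1`, the matrix
of `g` is `u_t` with `t = d⁻¹`. Moreover `u_s` and `u_t` with `s, t ≠ 0` are conjugate exactly when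
`s t` is a square, so the nontrivial unipotent classes correspond to the cosets of the squares in
`Fˣ`; a finite field containing a nonsquare has two of them.
-/

open Matrix
open scoped MatrixGroups

theorem isConj_iff_exists_det_eq_one {n R : Type*} [Fintype n] [DecidableEq n] [CommRing R]
    {A B : SpecialLinearGroup n R} :
    IsConj A B ↔ ∃ P : Matrix n n R, P.det = 1 ∧ P * (A : Matrix n n R) = B * P := by
  simp only [isConj_iff, mul_inv_eq_iff_eq_mul]
  constructor
  · rintro ⟨P, hP⟩
    exact ⟨P, P.det_coe, congrArg Subtype.val hP⟩
  · rintro ⟨P, hdet, hP⟩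
    exact ⟨⟨P, hdet⟩, Subtype.ext hP⟩

theorem exists_det_mulVec_ne_zero {R : Type*} [CommRing R] [IsReduced R]
    {N : Matrix (Fin 2) (Fin 2) R} (hN : N ≠ 0) (hsq : N ^ 2 = 0) :
    ∃ w, det (of ![N *ᵥ w, w]) ≠ 0 := by
  by_contra! hdet
  have h10 : N 1 0 = 0 := by simpa [det_fin_two] using hdet ![1, 0]
  have h01 : N 0 1 = 0 := by simpa [det_fin_two] using hdet ![0, 1]
  have h00 : N 0 0 = 0 := IsNilpotent.eq_zero ⟨2, by
    simpa [sq, mul_apply, h01] using congrFun₂ hsq 0 0⟩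
  have h11 : N 1 1 = 0 := IsNilpotent.eq_zero ⟨2, by
    simpa [sq, mul_apply, h10] using congrFun₂ hsq 1 1⟩
  exact hN (by ext i j; fin_cases i <;> fin_cases j <;> assumption)

section Field

variable {F : Type*} [Field F]

theorem isConj_ueps_of_mulVec {g : SL(2, F)} {t : F} {v w : Fin 2 → F}
    (hv : (g : Matrix (Fin 2) (Fin 2) F) *ᵥ v = v)
    (hw : (g : Matrix (Fin 2) (Fin 2) F) *ᵥ w = w + t • v) (hdet : det (of ![v, w]) = 1) :
    IsConj (ueps F t) g := by
  refine isConj_iff_exists_det_eq_one.2 ⟨(of ![v, w])ᵀ, by rw [det_transpose, hdet], ?_⟩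
  have hmul : (g : Matrix (Fin 2) (Fin 2) F) * (of ![v, w])ᵀ = (of ![v, w + t • v])ᵀ := by
    ext i j
    fin_cases j
    · exact congrFun hv i
    · exact congrFun hw i
  rw [hmul]
  ext i j
  fin_cases j
  · simp [ueps, mul_apply]
  · simp [ueps, mul_apply, mul_comm, add_comm]

theorem exists_isConj_ueps {g : SL(2, F)} (hg : g ≠ 1)
    (hsq : ((g : Matrix (Fin 2) (Fin 2) F) - 1) ^ 2 = 0) : ∃ t ≠ 0, IsConj (ueps F t) g := by
  set N := (g : Matrix (Fin 2) (Fin 2) F) - 1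
  have hN0 : N ≠ 0 := fun h => hg (Subtype.ext (sub_eq_zero.1 h))
  have hgN : (g : Matrix (Fin 2) (Fin 2) F) = 1 + N := (add_sub_cancel 1 _).symm
  obtain ⟨w, hw⟩ := exists_det_mulVec_ne_zero hN0 hsq
  set d := det (of ![N *ᵥ w, w]) with hd
  refine ⟨d⁻¹, inv_ne_zero hw, isConj_ueps_of_mulVec (v := N *ᵥ w) (w := d⁻¹ • w) ?_ ?_ ?_⟩
  · rw [hgN, add_mulVec, one_mulVec, mulVec_mulVec, ← sq, hsq, zero_mulVec, add_zero]
  · rw [hgN, add_mulVec, one_mulVec, mulVec_smul]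
  · calc det (of ![N *ᵥ w, d⁻¹ • w]) = d⁻¹ * d := by
          simp only [hd, det_fin_two, of_apply, cons_val_zero, cons_val_one, Pi.smul_apply,
            smul_eq_mul]
          ring
      _ = 1 := inv_mul_cancel₀ hw

theorem isSquare_mul_of_isConj_ueps {s t : F} (h : IsConj (ueps F s) (ueps F t)) :
    IsSquare (s * t) := by
  obtain ⟨P, hdet, hP⟩ := isConj_iff_exists_det_eq_one.1 h
  have h00 : P 1 0 * t = 0 := by simpa [ueps, mul_apply, mul_comm] using congrFun₂ hP 0 0
  have h01 : P 0 0 * s + P 0 1 = P 0 1 + t * P 1 1 := by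
    simpa [ueps, mul_apply] using congrFun₂ hP 0 1
  rw [det_fin_two] at hdet
  refine ⟨P 0 0 * s, ?_⟩
  linear_combination (-s * t) * hdet - s * P 0 1 * h00 - P 0 0 * s * h01

theorem isConj_ueps_of_isSquare_mul {s t : F} (hs : s ≠ 0) (ht : t ≠ 0) (h : IsSquare (s * t)) :
    IsConj (ueps F s) (ueps F t) := by
  obtain ⟨c, hc⟩ := h
  have hc0 : c ≠ 0 := left_ne_zero_of_mul (hc ▸ mul_ne_zero hs ht)
  have hct : c = t * (s / c) := by rw [← mul_div_assoc, eq_div_iff hc0, ← hc, mul_comm]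
  refine isConj_iff_exists_det_eq_one.2 ⟨!![c / s, 0; 0, s / c], ?_, ?_⟩
  · rw [det_fin_two_of, mul_zero, sub_zero, div_mul_div_cancel₀ hs, div_self hc0]
  · simp [ueps, hs, ← hct]

theorem stmt11_general {ε : F} (hε : ¬ IsSquare ε) (h : ∀ t : F, IsSquare t ∨ IsSquare (ε * t)) :
    (∀ g : SL(2, F), g ≠ 1 → ((g : Matrix (Fin 2) (Fin 2) F) - 1) ^ 2 = 0 →
        Xor (IsConj (u1 F) g) (IsConj (ueps F ε) g)) ∧
      ¬ IsConj (u1 F) (ueps F ε) := by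
  have hε0 : ε ≠ 0 := by rintro rfl; exact hε .zero
  have hne : ¬ IsConj (u1 F) (ueps F ε) := fun hc =>
    hε (by simpa only [one_mul] using isSquare_mul_of_isConj_ueps hc)
  refine ⟨fun g hg hsq => ?_, hne⟩
  obtain ⟨t, ht, htg⟩ := exists_isConj_ueps hg hsq
  rcases h t with h1 | h1
  · have hc := (isConj_ueps_of_isSquare_mul one_ne_zero ht (by rwa [one_mul])).trans htg
    exact .inl ⟨hc, fun h2 => hne (hc.trans h2.symm)⟩
  · have hc := (isConj_ueps_of_isSquare_mul hε0 ht h1).trans htg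
    exact .inr ⟨hc, fun h2 => hne (h2.trans hc.symm)⟩

end Field

theorem isSquare_or_isSquare_mul_of_not_isSquare {F : Type*} [Field F] [Finite F] {a : F}
    (ha : ¬ IsSquare a) (b : F) : IsSquare b ∨ IsSquare (a * b) := by
  classical
  have := Fintype.ofFinite F
  rw [or_iff_not_imp_left]
  intro hb
  have hχ : quadraticChar F (a * b) = 1 := by
    rw [map_mul, quadraticChar_neg_one_iff_not_isSquare.2 ha,
      quadraticChar_neg_one_iff_not_isSquare.2 hb, neg_one_mul, neg_neg]
  have hab : a * b ≠ 0 := mul_ne_zero (fun h => ha (h ▸ .zero)) fun h => hb (h ▸ .zero)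
  exact (quadraticChar_one_iff_isSquare hab).1 hχ

/-- Classification of the nontrivial unipotent conjugacy classes of `SL(2,F)`, `F` a finite
field of odd cardinality and `ε` a nonsquare:  every `g ∈ SL(2,F)` with `g ≠ 1` and
`(g − 1)² = 0` is conjugate to exactly one of `u₁` and `u_ε`; in particular `u₁` and `u_ε`
are not conjugate in `SL(2,F)`. -/
theorem stmt11 (F : Type*) [Field F] [Fintype F] (hq : Odd (Fintype.card F))
    (ε : F) (hε0 : ε ≠ 0) (hε : ¬ IsSquare ε) :
    (∀ g : Matrix.SpecialLinearGroup (Fin 2) F, g ≠ 1 →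
        ((g : Matrix (Fin 2) (Fin 2) F) - 1) ^ 2 = 0 →
        Xor' (IsConj (u1 F) g) (IsConj (ueps F ε) g)) ∧
      ¬ IsConj (u1 F) (ueps F ε) :=
  stmt11_general hε (isSquare_or_isSquare_mul_of_not_isSquare hε)
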